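/- arXiv:2010.12045 — 4 statements merged into one kernel-verified Lean document; each statement's English description precedes it below -/
import Mathlib

section
/- For the regular hyperbolic helical polygon, for every k ∈ ℤ the curvature angle satisfies −T_k ∘₋ T_{k+1} = 1 + 2a² sinh²(l/2) = cosh(ρ₀), where ρ₀ = 2 arcsinh(a sinh(l/2)); in particular the value is independent of k. -/
noncomputable section

/-- The Minkowski pseudo-scalar product on ℝ^{1,2} = ℝ³. -/
def mdot (a b : Fin 3 → ℝ) : ℝ := -(a 0 * b 0) + a 1 * b 1 + a 2 * b 2

/-- Tangent vectors of the regular hyperbolic helical polygon with side length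
`l` and torsion parameter `b` (with `a = √(1 + b²)`). -/
def hhpT (l b : ℝ) (k : ℤ) : Fin 3 → ℝ :=
  ![Real.sqrt (1 + b ^ 2) * Real.cosh (l / 2 + k * l),
    Real.sqrt (1 + b ^ 2) * Real.sinh (l / 2 + k * l), b]

theorem cosh_two_mul_eq_one_add_two_mul_sinh_sq (x : ℝ) :
    Real.cosh (2 * x) = 1 + 2 * Real.sinh x ^ 2 := by
  rw [Real.cosh_two_mul, Real.cosh_sq]
  ring

theorem cosh_two_mul_arsinh (x : ℝ) : Real.cosh (2 * Real.arsinh x) = 1 + 2 * x ^ 2 := by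
  rw [cosh_two_mul_eq_one_add_two_mul_sinh_sq, Real.sinh_arsinh]

theorem neg_mdot_cosh_sinh (r s x y c d : ℝ) :
    -(mdot ![r * Real.cosh x, r * Real.sinh x, c] ![s * Real.cosh y, s * Real.sinh y, d]) =
      r * s * Real.cosh (y - x) - c * d := by
  simp only [mdot, Matrix.cons_val, Real.cosh_sub]
  ring

theorem neg_mdot_hhpT (l b : ℝ) (j k : ℤ) :
    -(mdot (hhpT l b j) (hhpT l b k)) =
      1 + 2 * Real.sqrt (1 + b ^ 2) ^ 2 * Real.sinh ((k - j) * (l / 2)) ^ 2 := by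
  have sq_a : Real.sqrt (1 + b ^ 2) ^ 2 = 1 + b ^ 2 := Real.sq_sqrt (by positivity)
  have angle_sub : (l / 2 + k * l) - (l / 2 + j * l) = 2 * ((k - j) * (l / 2)) := by ring
  rw [hhpT, hhpT, neg_mdot_cosh_sinh, angle_sub,
    cosh_two_mul_eq_one_add_two_mul_sinh_sq]
  -- `a² - b² = 1` (each `T_k` is unit timelike) supplies the constant term.
  linear_combination sq_a

/-- The curvature angle of the regular hyperbolic helical polygon:
`−T_k ∘₋ T_{k+1} = 1 + 2a² sinh²(l/2) = cosh ρ₀`, with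
`ρ₀ = 2 arcsinh(a sinh(l/2))`, independently of `k`. -/
theorem hhp_curvature_angle (l b : ℝ) (hl : 0 < l) (hb : 0 < b) :
    ∀ k : ℤ,
      -(mdot (hhpT l b k) (hhpT l b (k + 1))) =
          1 + 2 * (Real.sqrt (1 + b ^ 2)) ^ 2 * (Real.sinh (l / 2)) ^ 2 ∧
      -(mdot (hhpT l b k) (hhpT l b (k + 1))) =
          Real.cosh (2 * Real.arsinh (Real.sqrt (1 + b ^ 2) * Real.sinh (l / 2))) := by
  intro k
  have curvature : -(mdot (hhpT l b k) (hhpT l b (k + 1))) =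
      1 + 2 * Real.sqrt (1 + b ^ 2) ^ 2 * Real.sinh (l / 2) ^ 2 := by
    simpa using neg_mdot_hhpT l b k (k + 1)
  refine ⟨curvature, ?_⟩
  rw [curvature, cosh_two_mul_arsinh, mul_pow, mul_assoc]
end
end

section
/- For the regular hyperbolic helical polygon, for every k ∈ ℤ the torsion angle satisfies ((T_{k−1} ∧₋ T_k) ∘₋ (T_k ∧₋ T_{k+1})) / (|T_{k−1} ∧₋ T_k|₀ · |T_k ∧₋ T_{k+1}|₀) = (1 − b² tanh²(l/2)) / (1 + b² tanh²(l/2)) = cos(θ₀), where θ₀ = 2 arctan(b tanh(l/2)) and |v|₀ denotes the (positive) square root of v ∘₋ v; in particular the value is independent of k. -/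
noncomputable section

/-- The Minkowski cross product on ℝ^{1,2} = ℝ³. -/
def mcross (a b : Fin 3 → ℝ) : Fin 3 → ℝ :=
  ![-(a 1 * b 2 - a 2 * b 1), a 2 * b 0 - a 0 * b 2, a 0 * b 1 - a 1 * b 0]

/-- The Minkowski pseudo-norm `|v|₀ = √(v ∘₋ v)` (for space-like vectors). -/
def mnorm (v : Fin 3 → ℝ) : ℝ := Real.sqrt (mdot v v)

/-!
Each hyperbolic helix `t ↦ (r cosh t, r sinh t, z)` is an orbit of the boosts of the first two
coordinates, which preserve the Minkowski product and commute with the cross product. Hence the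
product of two helix points depends only on the difference of their parameters, and the cross
product of the consecutive tangents meeting at the vertex `X_k` is a scalar, independent of `k`,
times a point of a second helix, taken at the midpoint parameter `k l`. The scalar cancels in the
normalized product, leaving a quotient of values at parameter differences `l` and `0`.
-/

open Real

/-- The normalized Minkowski product, the cosine of the angle between two space-like vectors that
span a space-like plane. If either vector has `mdot v v ≤ 0`, the denominator is `0` and so is the
value. -/
def mcos (u v : Fin 3 → ℝ) : ℝ := mdot u v / (mnorm u * mnorm v)

/-- The hyperbolic helix point on the orbit of `(r, 0, z)` under the boosts of the first two
coordinates: `hyperbolicHelix r z t` has boost parameter `t`. It parametrizes both the tangents of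
the helical polygon and the directions of their cross products. -/
def hyperbolicHelix (r z t : ℝ) : Fin 3 → ℝ := ![r * cosh t, r * sinh t, z]

theorem mdot_smul_smul (c d : ℝ) (u v : Fin 3 → ℝ) :
    mdot (c • u) (d • v) = c * d * mdot u v := by
  simp only [mdot, Pi.smul_apply, smul_eq_mul]
  ring

theorem mnorm_smul (c : ℝ) (v : Fin 3 → ℝ) : mnorm (c • v) = |c| * mnorm v := by
  rw [mnorm, mdot_smul_smul, sqrt_mul (mul_self_nonneg c), sqrt_mul_self_eq_abs, mnorm]

theorem mcos_smul_smul {c d : ℝ} (hcd : 0 < c * d) (u v : Fin 3 → ℝ) :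
    mcos (c • u) (d • v) = mcos u v := by
  rw [mcos, mdot_smul_smul, mnorm_smul, mnorm_smul, mul_mul_mul_comm, ← abs_mul,
    abs_of_pos hcd, mul_div_mul_left _ _ hcd.ne', mcos]

theorem mdot_hyperbolicHelix (q r y z s t : ℝ) :
    mdot (hyperbolicHelix q y s) (hyperbolicHelix r z t) = y * z - q * r * cosh (t - s) := by
  simp only [mdot, hyperbolicHelix, Matrix.cons_val, cosh_sub]
  ring

theorem mnorm_hyperbolicHelix (r z t : ℝ) : mnorm (hyperbolicHelix r z t) = √(z ^ 2 - r ^ 2) := by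
  rw [mnorm, mdot_hyperbolicHelix, sub_self, cosh_zero, mul_one, ← sq, ← sq]

theorem mcos_hyperbolicHelix {r z : ℝ} (hrz : r ^ 2 ≤ z ^ 2) (s t : ℝ) :
    mcos (hyperbolicHelix r z s) (hyperbolicHelix r z t) =
      (z ^ 2 - r ^ 2 * cosh (t - s)) / (z ^ 2 - r ^ 2) := by
  rw [mcos, mdot_hyperbolicHelix, mnorm_hyperbolicHelix, mnorm_hyperbolicHelix,
    mul_self_sqrt (sub_nonneg.2 hrz), ← sq, ← sq]

theorem mcross_hyperbolicHelix_sub_add (r z m h : ℝ) :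
    mcross (hyperbolicHelix r z (m - h)) (hyperbolicHelix r z (m + h)) =
      (2 * r * sinh h) • hyperbolicHelix z (r * cosh h) m := by
  ext i
  fin_cases i <;>
    simp only [mcross, hyperbolicHelix, cosh_add, sinh_add, cosh_sub, sinh_sub, Fin.zero_eta,
      Fin.mk_one, Fin.reduceFinMk, Matrix.cons_val, Pi.smul_apply, smul_eq_mul]
  · ring
  · ring
  · linear_combination 2 * r ^ 2 * sinh h * cosh h * cosh_sq m

theorem mcross_hhpT_sub_one (l b : ℝ) (k : ℤ) :
    mcross (hhpT l b (k - 1)) (hhpT l b k) =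
      (2 * √(1 + b ^ 2) * sinh (l / 2)) •
        hyperbolicHelix b (√(1 + b ^ 2) * cosh (l / 2)) (k * l) := by
  have hpred : l / 2 + ((k - 1 : ℤ) : ℝ) * l = k * l - l / 2 := by
    push_cast
    ring
  have hcurr : l / 2 + (k : ℝ) * l = k * l + l / 2 := add_comm _ _
  rw [← mcross_hyperbolicHelix_sub_add, hhpT, hhpT, hpred, hcurr, hyperbolicHelix, hyperbolicHelix]

theorem mcos_mcross_hhpT {l : ℝ} (hl : l ≠ 0) (b : ℝ) (k : ℤ) :
    mcos (mcross (hhpT l b (k - 1)) (hhpT l b k)) (mcross (hhpT l b k) (hhpT l b (k + 1))) =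
      (1 - b ^ 2 * tanh (l / 2) ^ 2) / (1 + b ^ 2 * tanh (l / 2) ^ 2) := by
  have hscale : 2 * √(1 + b ^ 2) * sinh (l / 2) ≠ 0 :=
    mul_ne_zero (by positivity) (sinh_ne_zero.2 (div_ne_zero hl two_ne_zero))
  have hnext := mcross_hhpT_sub_one l b (k + 1)
  rw [add_sub_cancel_right] at hnext
  have hparam : ((k + 1 : ℤ) : ℝ) * l - k * l = 2 * (l / 2) := by
    push_cast
    ring
  have hnormSq : (√(1 + b ^ 2) * cosh (l / 2)) ^ 2 - b ^ 2 =
      cosh (l / 2) ^ 2 + b ^ 2 * sinh (l / 2) ^ 2 := by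
    rw [mul_pow, sq_sqrt (by positivity)]
    linear_combination b ^ 2 * cosh_sq (l / 2)
  have hdot : (√(1 + b ^ 2) * cosh (l / 2)) ^ 2 - b ^ 2 * cosh (2 * (l / 2)) =
      cosh (l / 2) ^ 2 - b ^ 2 * sinh (l / 2) ^ 2 := by
    rw [mul_pow, sq_sqrt (by positivity), cosh_two_mul]
    ring
  have hspacelike : b ^ 2 ≤ (√(1 + b ^ 2) * cosh (l / 2)) ^ 2 :=
    sub_nonneg.1 (hnormSq ▸ by positivity)
  have hcosh : cosh (l / 2) ≠ 0 := (cosh_pos _).ne'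
  rw [mcross_hhpT_sub_one, hnext, mcos_smul_smul (mul_self_pos.2 hscale),
    mcos_hyperbolicHelix hspacelike, hparam, hnormSq, hdot, tanh_eq_sinh_div_cosh]
  field_simp

theorem cos_two_mul_arctan (x : ℝ) : cos (2 * arctan x) = (1 - x ^ 2) / (1 + x ^ 2) := by
  rw [cos_two_mul, cos_sq_arctan]
  field_simp
  ring

/-- The torsion angle of the regular hyperbolic helical polygon:
`((T_{k−1} ∧₋ T_k) ∘₋ (T_k ∧₋ T_{k+1})) / (|T_{k−1} ∧₋ T_k|₀ |T_k ∧₋ T_{k+1}|₀)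
 = (1 − b² tanh²(l/2)) / (1 + b² tanh²(l/2)) = cos θ₀`, where
`θ₀ = 2 arctan(b tanh(l/2))`, independently of `k`. -/
theorem hhp_torsion_angle (l b : ℝ) (hl : 0 < l) (hb : 0 < b) :
    ∀ k : ℤ,
      mdot (mcross (hhpT l b (k - 1)) (hhpT l b k)) (mcross (hhpT l b k) (hhpT l b (k + 1))) /
          (mnorm (mcross (hhpT l b (k - 1)) (hhpT l b k)) *
            mnorm (mcross (hhpT l b k) (hhpT l b (k + 1)))) =
        (1 - b ^ 2 * (Real.tanh (l / 2)) ^ 2) / (1 + b ^ 2 * (Real.tanh (l / 2)) ^ 2) ∧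
      mdot (mcross (hhpT l b (k - 1)) (hhpT l b k)) (mcross (hhpT l b k) (hhpT l b (k + 1))) /
          (mnorm (mcross (hhpT l b (k - 1)) (hhpT l b k)) *
            mnorm (mcross (hhpT l b k) (hhpT l b (k + 1)))) =
        Real.cos (2 * Real.arctan (b * Real.tanh (l / 2))) := by
  intro k
  have htorsion := mcos_mcross_hhpT hl.ne' b k
  refine ⟨htorsion, htorsion.trans ?_⟩
  rw [cos_two_mul_arctan, mul_pow]
end
end

section
/- For every l > 0 and b > 0, setting a = √(1 + b²), the curvature angle ρ₀ = 2 arcsinh(a sinh(l/2)) and the torsion angle θ₀ = 2 arctan(b tanh(l/2)) of the regular hyperbolic helical polygon satisfy the compatibility identity cos(θ₀/2) · cosh(ρ₀/2) = cosh(l/2). -/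
noncomputable section

theorem one_add_one_add_mul_sinh_sq (c x : ℝ) :
    1 + (1 + c) * Real.sinh x ^ 2 = Real.cosh x ^ 2 * (1 + c * Real.tanh x ^ 2) := by
  have sinh_eq : Real.cosh x * Real.tanh x = Real.sinh x := by
    rw [Real.tanh_eq_sinh_div_cosh, mul_div_cancel₀ _ (Real.cosh_pos x).ne']
  calc 1 + (1 + c) * Real.sinh x ^ 2
    _ = Real.cosh x ^ 2 + c * Real.sinh x ^ 2 := by rw [Real.cosh_sq]; ring
    _ = Real.cosh x ^ 2 * (1 + c * Real.tanh x ^ 2) := by rw [← sinh_eq]; ring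

theorem cosh_arsinh_sqrt_one_add_sq_mul_sinh (b x : ℝ) :
    Real.cosh (Real.arsinh (√(1 + b ^ 2) * Real.sinh x)) =
      Real.cosh x * √(1 + (b * Real.tanh x) ^ 2) := by
  rw [Real.cosh_arsinh, mul_pow, Real.sq_sqrt (by positivity), one_add_one_add_mul_sinh_sq,
    Real.sqrt_mul (sq_nonneg _), Real.sqrt_sq (Real.cosh_pos x).le, mul_pow]

/-- Compatibility between the curvature angle `ρ₀ = 2 arcsinh(a sinh(l/2))`
and the torsion angle `θ₀ = 2 arctan(b tanh(l/2))` of the regular hyperbolic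
helical polygon: `cos(θ₀/2) cosh(ρ₀/2) = cosh(l/2)`. -/
theorem hhp_angle_compatibility (l b : ℝ) (hl : 0 < l) (hb : 0 < b) :
    Real.cos (2 * Real.arctan (b * Real.tanh (l / 2)) / 2) *
      Real.cosh (2 * Real.arsinh (Real.sqrt (1 + b ^ 2) * Real.sinh (l / 2)) / 2) =
    Real.cosh (l / 2) := by
  have sqrt_ne_zero : √(1 + (b * Real.tanh (l / 2)) ^ 2) ≠ 0 := by positivity
  rw [mul_div_cancel_left₀ _ two_ne_zero, mul_div_cancel_left₀ _ two_ne_zero, Real.cos_arctan,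
    cosh_arsinh_sqrt_one_add_sq_mul_sinh, mul_left_comm, one_div_mul_cancel sqrt_ne_zero, mul_one]
end
end

section
/- For the regular circular helical polygon, for every k ∈ ℤ the torsion angle satisfies ((T_{k−1} ∧₋ T_k) ∘₋ (T_k ∧₋ T_{k+1})) / (|T_{k−1} ∧₋ T_k|₀ · |T_k ∧₋ T_{k+1}|₀) = (1 − b² tan²(π/M)) / (1 + b² tan²(π/M)) = cos(θ₀), where θ₀ = 2 arctan(b tan(π/M)) and |v|₀ denotes the (positive) square root of v ∘₋ v; in particular the value is independent of k. -/
/-!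
The tangent vectors `T_k` lie on the hyperboloid `t ∘₋ t = -1`, a model of the hyperbolic plane,
where they are the vertices of a regular polygon, and the cosine of the torsion angle is that of
the exterior angle of this polygon at `T_k`. The hyperbolic law of cosines expresses it through
`T_{k-1} ∘₋ T_k = -1 - 2 (b² - 1) sin² φ` and `T_{k-1} ∘₋ T_{k+1} = -1 - 2 (b² - 1) sin² 2φ` with
`φ = π / M`; the common factor `4 (b² - 1) sin² φ` then cancels, which leaves
`(cos² φ - b² sin² φ) / (cos² φ + b² sin² φ)`.
-/

noncomputable section

open Real

/-- Tangent vectors of the regular circular helical polygon with `M` sides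
and torsion parameter `b` (with `a = √(b² − 1)`). -/
def chpT (M : ℕ) (b : ℝ) (k : ℤ) : Fin 3 → ℝ :=
  ![b, Real.sqrt (b ^ 2 - 1) * Real.cos (2 * π * k / M),
    Real.sqrt (b ^ 2 - 1) * Real.sin (2 * π * k / M)]

/-- The Minkowski cosine of the angle between the normals `u ∧₋ v` and `v ∧₋ w`: the cosine of the
torsion angle of a polygon at an edge with tangent vector `v`, whose neighbouring edges have tangent
vectors `u` and `w`. It is meant for linearly independent consecutive tangents, and is `0` by
division by zero when a normal vanishes. -/
def cosTorsionAngle (u v w : Fin 3 → ℝ) : ℝ :=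
  mdot (mcross u v) (mcross v w) / (mnorm (mcross u v) * mnorm (mcross v w))

/-- The point of the hyperboloid `t ∘₋ t = -1` at height `b` and polar angle `θ`: the tangent
vectors of a circular helical polygon all have this form, for a common `b`. It lies on the
hyperboloid only if `1 ≤ b ^ 2`, since otherwise the square root is `0`. -/
def helixTangent (b θ : ℝ) : Fin 3 → ℝ :=
  ![b, √(b ^ 2 - 1) * cos θ, √(b ^ 2 - 1) * sin θ]

theorem mdot_comm (u v : Fin 3 → ℝ) : mdot u v = mdot v u := by
  simp only [mdot, mul_comm]

theorem mdot_mcross_mcross (u v w z : Fin 3 → ℝ) :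
    mdot (mcross u v) (mcross w z) = mdot u z * mdot v w - mdot u w * mdot v z := by
  simp only [mdot, mcross, Matrix.cons_val]
  ring

theorem mdot_mcross_mcross_of_unit_timelike {v : Fin 3 → ℝ} (hv : mdot v v = -1)
    (u w : Fin 3 → ℝ) :
    mdot (mcross u v) (mcross v w) = -(mdot u w + mdot u v * mdot v w) := by
  rw [mdot_mcross_mcross, hv]
  ring

theorem mnorm_mcross_of_unit_timelike {u v : Fin 3 → ℝ} (hu : mdot u u = -1)
    (hv : mdot v v = -1) : mnorm (mcross u v) = √(mdot u v ^ 2 - 1) := by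
  rw [mnorm, mdot_mcross_mcross, hu, hv, mdot_comm v u]
  ring_nf

/-- The hyperbolic law of cosines for the triangle `u v w`, at the exterior angle at `v`. -/
theorem cosTorsionAngle_of_unit_timelike {u v w : Fin 3 → ℝ} (hu : mdot u u = -1)
    (hv : mdot v v = -1) (hw : mdot w w = -1) :
    cosTorsionAngle u v w =
      -(mdot u w + mdot u v * mdot v w) / (√(mdot u v ^ 2 - 1) * √(mdot v w ^ 2 - 1)) := by
  rw [cosTorsionAngle, mdot_mcross_mcross_of_unit_timelike hv,
    mnorm_mcross_of_unit_timelike hu hv, mnorm_mcross_of_unit_timelike hv hw]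

theorem mdot_helixTangent {b : ℝ} (hb : 1 ≤ b ^ 2) (θ ψ : ℝ) :
    mdot (helixTangent b θ) (helixTangent b ψ) = -b ^ 2 + (b ^ 2 - 1) * cos (ψ - θ) := by
  have hsqrt : √(b ^ 2 - 1) ^ 2 = b ^ 2 - 1 := sq_sqrt (sub_nonneg.2 hb)
  simp only [mdot, helixTangent, Matrix.cons_val, cos_sub]
  linear_combination (cos θ * cos ψ + sin θ * sin ψ) * hsqrt

theorem mdot_helixTangent_self {b : ℝ} (hb : 1 ≤ b ^ 2) (θ : ℝ) :
    mdot (helixTangent b θ) (helixTangent b θ) = -1 := by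
  rw [mdot_helixTangent hb, sub_self, cos_zero]
  ring

theorem cosTorsionAngle_helixTangent {b : ℝ} (hb : 1 < b ^ 2) {φ : ℝ} (hφ : sin φ ≠ 0) (θ : ℝ) :
    cosTorsionAngle (helixTangent b (θ - 2 * φ)) (helixTangent b θ)
        (helixTangent b (θ + 2 * φ)) =
      (cos φ ^ 2 - b ^ 2 * sin φ ^ 2) / (cos φ ^ 2 + b ^ 2 * sin φ ^ 2) := by
  have unit := mdot_helixTangent_self hb.le
  have adjacent : -b ^ 2 + (b ^ 2 - 1) * cos (2 * φ) = -1 - 2 * (b ^ 2 - 1) * sin φ ^ 2 := by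
    rw [cos_two_mul_eq_one_sub]
    ring
  have opposite : -b ^ 2 + (b ^ 2 - 1) * cos (2 * (2 * φ)) =
      -1 - 8 * (b ^ 2 - 1) * sin φ ^ 2 * cos φ ^ 2 := by
    rw [cos_two_mul_eq_one_sub, sin_two_mul]
    ring
  have normal_sq : (-1 - 2 * (b ^ 2 - 1) * sin φ ^ 2) ^ 2 - 1 =
      4 * (b ^ 2 - 1) * sin φ ^ 2 * (cos φ ^ 2 + b ^ 2 * sin φ ^ 2) := by
    rw [cos_sq']
    ring
  have normal_dot : -(-1 - 8 * (b ^ 2 - 1) * sin φ ^ 2 * cos φ ^ 2 +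
        (-1 - 2 * (b ^ 2 - 1) * sin φ ^ 2) * (-1 - 2 * (b ^ 2 - 1) * sin φ ^ 2)) =
      4 * (b ^ 2 - 1) * sin φ ^ 2 * (cos φ ^ 2 - b ^ 2 * sin φ ^ 2) := by
    rw [cos_sq']
    ring
  rw [cosTorsionAngle_of_unit_timelike (unit _) (unit _) (unit _)]
  simp only [mdot_helixTangent hb.le, sub_sub_cancel, add_sub_cancel_left,
    show θ + 2 * φ - (θ - 2 * φ) = 2 * (2 * φ) by ring, adjacent, opposite, normal_sq, normal_dot]
  have : 0 < b ^ 2 - 1 := sub_pos.2 hb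
  rw [mul_self_sqrt (by positivity), mul_div_mul_left _ _ (by positivity)]

theorem cos_sq_sub_div_cos_sq_add {φ : ℝ} (hφ : cos φ ≠ 0) (c : ℝ) :
    (cos φ ^ 2 - c * sin φ ^ 2) / (cos φ ^ 2 + c * sin φ ^ 2) =
      (1 - c * tan φ ^ 2) / (1 + c * tan φ ^ 2) := by
  rw [← mul_div_mul_right (1 - c * tan φ ^ 2) _ (pow_ne_zero 2 hφ), ← tan_mul_cos hφ]
  ring_nf

theorem chp_torsion_angle_general {b φ : ℝ} (hb : 1 < |b|) (hsin : sin φ ≠ 0) (hcos : cos φ ≠ 0)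
    (θ : ℝ) :
    cosTorsionAngle (helixTangent b (θ - 2 * φ)) (helixTangent b θ)
          (helixTangent b (θ + 2 * φ)) =
        (1 - b ^ 2 * tan φ ^ 2) / (1 + b ^ 2 * tan φ ^ 2) ∧
      cosTorsionAngle (helixTangent b (θ - 2 * φ)) (helixTangent b θ)
          (helixTangent b (θ + 2 * φ)) =
        cos (2 * arctan (b * tan φ)) := by
  rw [cosTorsionAngle_helixTangent ((one_lt_sq_iff_one_lt_abs b).2 hb) hsin,
    cos_sq_sub_div_cos_sq_add hcos, cos_two_mul_arctan, mul_pow]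
  exact ⟨rfl, rfl⟩

theorem chpT_sub_one (M : ℕ) (b : ℝ) (k : ℤ) :
    chpT M b (k - 1) = helixTangent b (2 * π * k / M - 2 * (π / M)) := by
  rw [chpT, helixTangent, Int.cast_sub, Int.cast_one]
  ring_nf

theorem chpT_add_one (M : ℕ) (b : ℝ) (k : ℤ) :
    chpT M b (k + 1) = helixTangent b (2 * π * k / M + 2 * (π / M)) := by
  rw [chpT, helixTangent, Int.cast_add, Int.cast_one]
  ring_nf

theorem sin_pi_div_natCast_pos {M : ℕ} (hM : 1 < M) : 0 < sin (π / M) :=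
  sin_pos_of_pos_of_lt_pi (by positivity) (div_lt_self pi_pos (mod_cast hM))

theorem cos_pi_div_natCast_pos {M : ℕ} (hM : 2 < M) : 0 < cos (π / M) :=
  cos_pos_of_mem_Ioo ⟨by linarith [pi_pos, show 0 < π / M by positivity],
    div_lt_div_of_pos_left pi_pos two_pos (mod_cast hM)⟩

/-- The torsion angle of the regular circular helical polygon:
`((T_{k−1} ∧₋ T_k) ∘₋ (T_k ∧₋ T_{k+1})) / (|T_{k−1} ∧₋ T_k|₀ |T_k ∧₋ T_{k+1}|₀)
 = (1 − b² tan²(π/M)) / (1 + b² tan²(π/M)) = cos θ₀`, where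
`θ₀ = 2 arctan(b tan(π/M))`, independently of `k`. -/
theorem chp_torsion_angle (M : ℕ) (hM : 3 ≤ M) (b : ℝ) (hb : 1 < b) :
    ∀ k : ℤ,
      mdot (mcross (chpT M b (k - 1)) (chpT M b k)) (mcross (chpT M b k) (chpT M b (k + 1))) /
          (mnorm (mcross (chpT M b (k - 1)) (chpT M b k)) *
            mnorm (mcross (chpT M b k) (chpT M b (k + 1)))) =
        (1 - b ^ 2 * (Real.tan (π / M)) ^ 2) / (1 + b ^ 2 * (Real.tan (π / M)) ^ 2) ∧
      mdot (mcross (chpT M b (k - 1)) (chpT M b k)) (mcross (chpT M b k) (chpT M b (k + 1))) /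
          (mnorm (mcross (chpT M b (k - 1)) (chpT M b k)) *
            mnorm (mcross (chpT M b k) (chpT M b (k + 1)))) =
        Real.cos (2 * Real.arctan (b * Real.tan (π / M))) := by
  intro k
  rw [chpT_sub_one, chpT_add_one]
  exact chp_torsion_angle_general (hb.trans_le (le_abs_self b))
    (sin_pi_div_natCast_pos (by lia)).ne' (cos_pi_div_natCast_pos hM).ne' (2 * π * k / M)
end
end
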